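/- Let p₁, …, p_r ∈ R be ℂ-linearly independent homogeneous polynomials of degree n with r ≥ 4 generating the ideal I, such that the set of their common zeros in ℂ³ ∖ {0}, taken up to nonzero scalar multiples, is finite, and such that the rational map to ℙ^{r−1} they define is generically finite in the following sense: there exists v₀ ∈ ℂ³ with (p₁(v₀),…,p_r(v₀)) ≠ 0 such that the set of points of the projectivization of ℂ³ represented by vectors v with (p₁(v),…,p_r(v)) = λ·(p₁(v₀),…,p_r(v₀)) for some λ ∈ ℂ ∖ {0} is finite. Let D be the eventual constant value of dim_ℂ (R/I)_k for all sufficiently large k. If m ≥ 2n − 2 is an integer with dim_ℂ (R/I)_m = D, then dim_ℂ (R/I)_k = D for every integer k ≥ m. -/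

import Mathlib

/-!
The Hilbert function of `R/I` is non-increasing in degrees `≥ 2n - 2`; since it is eventually `D`,
attaining `D` at some `m ≥ 2n - 2` forces it to stay equal to `D` from there on.

For the monotonicity, choose a line `l = 0` in the projective plane that misses the finitely many
common zeros of the `p i` (`exists_line_avoiding`). Restricted to this line, the `p i` are binary
forms of degree `n` without common zero. Dehomogenized, they are univariate polynomials of degree
at most `n` that generate the unit ideal, one of them having degree exactly `n`; division with
remainder by the latter shows that they generate all binary forms of degree `≥ 2n - 1`
(`exists_bounded_combination`). Lifting back to `R`, every form of degree `k + 1 ≥ 2n - 1` lies in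
`I + l R_k`, i.e. multiplication by `l` maps `(R/I)_k` onto `(R/I)_{k+1}` (`quotDim_succ_le`).
-/

open MvPolynomial

/-- `R3` is the polynomial ring `ℂ[s,t,u]`. -/
abbrev R3 : Type := MvPolynomial (Fin 3) ℂ

/-- `quotDim I k` is the dimension of the degree-`k` graded piece of `R/I`. -/
noncomputable def quotDim (I : Ideal R3) (k : ℕ) : ℕ :=
  Module.finrank ℂ
    ((homogeneousSubmodule (Fin 3) ℂ k).map (Ideal.Quotient.mkₐ ℂ I).toLinearMap)

/-- The linear form `s + τ t + τ² u`. -/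
noncomputable def lineForm (τ : ℂ) : R3 := X 0 + C τ * X 1 + C (τ ^ 2) * X 2

/-- Restriction of a form to the line `s + τ t + τ² u = 0`, written in the affine coordinate `t`
of the chart `u = 1`; the remaining point of the line is `(-τ : 1 : 0)`. -/
noncomputable def restrictLine (τ : ℂ) : R3 →ₐ[ℂ] Polynomial ℂ :=
  aeval ![Polynomial.C (-τ) * Polynomial.X + Polynomial.C (-τ ^ 2), Polynomial.X, 1]

lemma eval_restrictLine (τ x : ℂ) (F : R3) :
    (restrictLine τ F).eval x = eval ![-τ * x - τ ^ 2, x, 1] F := by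
  have h : (Polynomial.evalRingHom x).comp (restrictLine τ).toRingHom =
      eval ![-τ * x - τ ^ 2, x, 1] := by
    apply MvPolynomial.ringHom_ext
    · intro c
      simp [restrictLine]
    · intro i
      fin_cases i <;> simp [restrictLine, sub_eq_add_neg]
  exact congrArg (fun f => f F) h

/-- The restriction of a form of degree `k` has degree at most `k`, and its coefficient of
degree `k` is the value of the form at the point at infinity of the line. -/
lemma restrictLine_degree (τ : ℂ) {k : ℕ} {F : R3} (hF : F.IsHomogeneous k) :
    (restrictLine τ F).natDegree ≤ k ∧
      (restrictLine τ F).coeff k = eval ![-τ, 1, 0] F := by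
  have hmon : ∀ d ∈ F.support,
      (restrictLine τ (monomial d (coeff d F))).natDegree ≤ k ∧
      (restrictLine τ (monomial d (coeff d F))).coeff k =
        eval ![-τ, 1, 0] (monomial d (coeff d F)) := by
    intro d hd
    have hk : d 0 + d 1 + d 2 = k := by
      rw [hF.degree_eq_sum_deg_support hd, ← Fin.sum_univ_three d]
      exact (Finsupp.sum_fintype d (fun _ a => a) (by simp)).symm
    have h0 : (Polynomial.C (-τ) * Polynomial.X + Polynomial.C (-τ ^ 2)).natDegree ≤ 1 :=
      Polynomial.natDegree_linear_le
    have hX : (Polynomial.X : Polynomial ℂ).natDegree ≤ 1 := Polynomial.natDegree_X_le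
    have h1 : (1 : Polynomial ℂ).natDegree ≤ 1 := by simp
    have e : restrictLine τ (monomial d (coeff d F)) = Polynomial.C (coeff d F) *
        ((Polynomial.C (-τ) * Polynomial.X + Polynomial.C (-τ ^ 2)) ^ d 0 *
          Polynomial.X ^ d 1 * 1 ^ d 2) := by
      simp only [restrictLine, aeval_monomial]
      rw [Finsupp.prod_fintype _ _ (by simp), Fin.prod_univ_three]
      simp
    have b0 := Polynomial.natDegree_pow_le_of_le (d 0) h0
    have b1 := Polynomial.natDegree_pow_le_of_le (d 1) hX
    have b2 := Polynomial.natDegree_pow_le_of_le (d 2) h1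
    have b01 := Polynomial.natDegree_mul_le_of_le b0 b1
    have b012 := Polynomial.natDegree_mul_le_of_le b01 b2
    rw [e]
    constructor
    · refine (Polynomial.natDegree_C_mul_le _ _).trans (b012.trans (by omega))
    · have hk' : k = d 0 * 1 + d 1 * 1 + d 2 * 1 := by omega
      rw [Polynomial.coeff_C_mul, hk', 
        Polynomial.coeff_mul_add_eq_of_natDegree_le b01 b2,
        Polynomial.coeff_mul_add_eq_of_natDegree_le b0 b1,
        Polynomial.coeff_pow_of_natDegree_le h0, Polynomial.coeff_pow_of_natDegree_le hX,
        Polynomial.coeff_pow_of_natDegree_le h1, eval_monomial,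
        Finsupp.prod_fintype _ _ (by simp), Fin.prod_univ_three]
      have c0 : (Polynomial.C (-τ) * Polynomial.X + Polynomial.C (-τ ^ 2)).coeff 1 = -τ := by
        rw [Polynomial.coeff_add, Polynomial.coeff_C_mul, Polynomial.coeff_X_one,
          Polynomial.coeff_C_succ, mul_one, add_zero]
      rw [c0]
      simp [Polynomial.coeff_one]
  have hs : restrictLine τ F = ∑ d ∈ F.support, restrictLine τ (monomial d (coeff d F)) := by
    conv_lhs => rw [F.as_sum]
    rw [map_sum]
  constructor
  · rw [hs]
    exact Polynomial.natDegree_sum_le_of_forall_le _ _ fun d hd => (hmon d hd).1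
  · rw [hs, Polynomial.finsetSum_coeff]
    conv_rhs => rw [F.as_sum, map_sum]
    exact Finset.sum_congr rfl fun d hd => (hmon d hd).2

/-- Every univariate polynomial of degree at most `d` is the restriction of a form of degree `d`. -/
lemma exists_lift (τ : ℂ) (a : Polynomial ℂ) (d : ℕ) (ha : a.natDegree ≤ d) :
    ∃ A : R3, A.IsHomogeneous d ∧ restrictLine τ A = a := by
  refine ⟨∑ j ∈ Finset.range (d + 1), C (a.coeff j) * (X 1 ^ j * X 2 ^ (d - j)), ?_, ?_⟩
  · apply IsHomogeneous.sum
    intro j hj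
    have hj' : j ≤ d := by simpa [Nat.lt_succ_iff] using hj
    apply IsHomogeneous.C_mul
    have := (isHomogeneous_X_pow (R := ℂ) (1 : Fin 3) j).mul
      (isHomogeneous_X_pow (R := ℂ) (2 : Fin 3) (d - j))
    rwa [Nat.add_sub_cancel' hj'] at this
  · conv_rhs => rw [a.as_sum_range' (d + 1) (by omega)]
    rw [map_sum]
    refine Finset.sum_congr rfl fun j _ => ?_
    simp [restrictLine, ← Polynomial.C_mul_X_pow_eq_monomial, Polynomial.algebraMap_eq]

lemma eval_smul_of_isHomogeneous {k : ℕ} {F : R3} (hF : F.IsHomogeneous k) (c : ℂ)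
    (v : Fin 3 → ℂ) : eval (c • v) F = c ^ k * eval v F := by
  rw [eval_eq, eval_eq, Finset.mul_sum]
  refine Finset.sum_congr rfl fun d hd => ?_
  rw [hF.degree_eq_sum_deg_support hd]
  simp only [Pi.smul_apply, smul_eq_mul, mul_pow, Finset.prod_mul_distrib, Finset.prod_pow_eq_pow_sum]
  ring

/-- A form whose restriction to the line vanishes is a multiple of the equation of the line. -/
lemma exists_lineForm_mul (τ : ℂ) {k : ℕ} {F : R3} (hF : F.IsHomogeneous (k + 1))
    (h0 : restrictLine τ F = 0) :
    ∃ b : R3, b.IsHomogeneous k ∧ F = lineForm τ * b := by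
  -- `G` is `F` with `s` replaced by `-τ t - τ² u`; it is congruent to `F` modulo the line.
  set w : Fin 3 → R3 := ![-C τ * X 1 - C (τ ^ 2) * X 2, X 1, X 2] with hw
  have hdiff : F - aeval w F ∈ Ideal.span {lineForm τ} := by
    rw [← Ideal.Quotient.eq_zero_iff_mem, map_sub, sub_eq_zero]
    have h : Ideal.Quotient.mkₐ ℂ (Ideal.span {lineForm τ}) =
        (Ideal.Quotient.mkₐ ℂ (Ideal.span {lineForm τ})).comp (aeval w) := by
      apply MvPolynomial.algHom_ext
      intro i
      fin_cases i
      · simp only [hw, Fin.zero_eta, AlgHom.comp_apply, aeval_X, Matrix.cons_val_zero,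
          Ideal.Quotient.mkₐ_eq_mk]
        rw [Ideal.Quotient.eq, Ideal.mem_span_singleton]
        exact ⟨1, by simp only [lineForm]; ring⟩
      · simp [hw]
      · simp [hw]
    exact congrArg (fun f => f F) h
  have hG : aeval w F = 0 := by
    have hX : (X 2 : R3) * aeval w F = 0 := by
      apply MvPolynomial.funext
      intro v
      rw [map_mul, eval_X, map_zero]
      by_cases hv : v 2 = 0
      · simp [hv]
      have e1 : eval v (aeval w F) = eval (fun i => eval v (w i)) F := by
        have h : (eval v).comp (aeval w).toRingHom = eval (fun i => eval v (w i)) := by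
          apply MvPolynomial.ringHom_ext <;> simp
        exact congrArg (fun f => f F) h
      have e2 : (fun i => eval v (w i)) =
          v 2 • ![-τ * (v 1 / v 2) - τ ^ 2, v 1 / v 2, 1] := by
        funext i
        fin_cases i
        · simp [hw]
          field_simp
        · simp [hw]
          field_simp
        · simp [hw]
      rw [e1, e2]
      have := eval_restrictLine τ (v 1 / v 2) F
      rw [h0, Polynomial.eval_zero] at this
      rw [eval_smul_of_isHomogeneous hF, ← this, mul_zero, mul_zero]
    exact (mul_eq_zero.mp hX).resolve_left (X_ne_zero 2)
  rw [hG, sub_zero, Ideal.mem_span_singleton] at hdiff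
  obtain ⟨b, hb⟩ := hdiff
  have hl : (lineForm τ).IsHomogeneous 1 :=
    ((isHomogeneous_X _ _).add (isHomogeneous_C_mul_X _ _)).add (isHomogeneous_C_mul_X _ _)
  refine ⟨homogeneousComponent k b, homogeneousComponent_isHomogeneous k b, ?_⟩
  let _ := MvPolynomial.gradedAlgebra (σ := Fin 3) (R := ℂ)
  have h := DirectSum.coe_decompose_mul_add_of_left_mem (homogeneousSubmodule (Fin 3) ℂ)
    (j := k) (b := b) hl
  rw [← hb] at h
  have h1 := homogeneousComponent_of_mem (m := 1 + k) (n := 1 + k) (p := F)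
    (by rwa [add_comm])
  rw [if_pos rfl] at h1
  rw [← h1]
  exact (decomposition.decompose'_apply _ _).symm.trans
    (h.trans (congrArg _ (decomposition.decompose'_apply _ _)))

/-- Univariate version: if polynomials of degree at most `n`, one of which has degree exactly `n`,
generate the unit ideal, then any `h` of degree at most `e ≥ 2n - 1` is a combination of them with
coefficients of degree at most `e - n`: all coefficients but one are reduced modulo the
polynomial of degree `n`, and the bound on the last one follows by comparing degrees. -/
lemma exists_bounded_combination {r n e : ℕ} (he : 2 * n ≤ e + 1) (q : Fin r → Polynomial ℂ)
    (hq : ∀ i, (q i).natDegree ≤ n) (i₀ : Fin r) (hi₀ : (q i₀).coeff n ≠ 0)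
    (hunit : Ideal.span (Set.range q) = ⊤) (h : Polynomial ℂ) (hh : h.natDegree ≤ e) :
    ∃ a : Fin r → Polynomial ℂ, (∀ i, (a i).natDegree ≤ e - n) ∧ ∑ i, a i * q i = h := by
  classical
  have hmem : h ∈ Ideal.span (Set.range q) := by rw [hunit]; trivial
  obtain ⟨c, hc⟩ := (Ideal.mem_span_range_iff_exists_fun).1 hmem
  have hne : q i₀ ≠ 0 := fun h => hi₀ (by simp [h])
  have hdeg : (q i₀).natDegree = n := le_antisymm (hq i₀) (Polynomial.le_natDegree_of_ne_zero hi₀)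
  let s := Finset.univ.erase i₀
  let z : Polynomial ℂ := c i₀ + ∑ i ∈ s, c i / q i₀ * q i
  have hsum : z * q i₀ + ∑ i ∈ s, c i % q i₀ * q i = h := by
    rw [← hc, ← Finset.add_sum_erase _ _ (Finset.mem_univ i₀)]
    simp only [z, add_mul, Finset.sum_mul, add_assoc]
    rw [← Finset.sum_add_distrib]
    congr 1
    refine Finset.sum_congr rfl fun i _ => ?_
    conv_rhs => rw [← EuclideanDomain.div_add_mod (c i) (q i₀)]
    ring
  have hmod : ∀ i, (c i % q i₀).natDegree ≤ n - 1 := by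
    intro i
    by_cases h0 : c i % q i₀ = 0
    · simp [h0]
    have := Polynomial.natDegree_lt_natDegree h0 (Polynomial.degree_mod_lt (c i) hne)
    omega
  have hrest : (∑ i ∈ s, c i % q i₀ * q i).natDegree ≤ e := by
    refine Polynomial.natDegree_sum_le_of_forall_le _ _ fun i _ => ?_
    -- for `n = 0` the remainders vanish, which the truncated `n - 1` still bounds
    refine (Polynomial.natDegree_mul_le_of_le (hmod i) (hq i)).trans (by omega)
  have hz : z.natDegree ≤ e - n := by
    by_cases hz0 : z = 0
    · simp [hz0]
    have h1 : (z * q i₀).natDegree ≤ e := by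
      rw [eq_sub_of_add_eq hsum]
      exact (Polynomial.natDegree_sub_le _ _).trans (max_le hh hrest)
    rw [Polynomial.natDegree_mul hz0 hne] at h1
    omega
  refine ⟨fun i => if i = i₀ then z else c i % q i₀, fun i => ?_, ?_⟩
  · dsimp only
    split_ifs
    · exact hz
    · exact (hmod i).trans (by omega)
  · rw [← hsum, ← Finset.add_sum_erase _ _ (Finset.mem_univ i₀)]
    simp only [if_true]
    congr 1
    refine Finset.sum_congr rfl fun i hi => ?_
    rw [if_neg (Finset.ne_of_mem_erase hi)]

/-- A finite set of points of the projective plane is missed by some line of the family. -/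
lemma exists_line_avoiding (S : Set (Projectivization ℂ (Fin 3 → ℂ))) (hS : S.Finite) :
    ∃ τ : ℂ, ∀ (v : Fin 3 → ℂ) (hv : v ≠ 0), Projectivization.mk ℂ v hv ∈ S →
      v 0 + τ * v 1 + τ ^ 2 * v 2 ≠ 0 := by
  classical
  let P : Projectivization ℂ (Fin 3 → ℂ) → Polynomial ℂ := fun q =>
    Polynomial.C (q.rep 0) + Polynomial.C (q.rep 1) * Polynomial.X +
      Polynomial.C (q.rep 2) * Polynomial.X ^ 2
  have hP : ∀ q, P q ≠ 0 := by
    intro q h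
    apply q.rep_nonzero
    funext i
    have h' := fun j => congrArg (fun f => Polynomial.coeff f j) h
    have h0 := h' 0
    have h1 := h' 1
    have h2 := h' 2
    simp [P, Polynomial.coeff_X, Polynomial.coeff_C, Polynomial.coeff_X_pow] at h0 h1 h2
    fin_cases i <;> simp [h0, h1, h2]
  have hprod : ∏ q ∈ hS.toFinset, P q ≠ 0 := Finset.prod_ne_zero_iff.2 fun q _ => hP q
  obtain ⟨τ, hτ⟩ := Polynomial.exists_eval_ne_zero_of_natDegree_lt_card _ hprod
    (by simpa using Cardinal.nat_lt_continuum _)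
  refine ⟨τ, fun v hv hvS h => hτ ?_⟩
  rw [Polynomial.eval_prod]
  refine Finset.prod_eq_zero (hS.mem_toFinset.2 hvS) ?_
  obtain ⟨c, hc⟩ := Projectivization.exists_smul_eq_mk_rep ℂ v hv
  simp only [P, ← hc, Polynomial.eval_add, Polynomial.eval_mul, Polynomial.eval_C,
    Polynomial.eval_X, Polynomial.eval_pow, Pi.smul_apply, Units.smul_def, smul_eq_mul]
  linear_combination (c : ℂ) * h

/-- If every form of degree `k + 1` is congruent to a multiple of a fixed `l` by a form of
degree `k`, the Hilbert function does not increase from `k` to `k + 1`. -/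
lemma quotDim_succ_le (I : Ideal R3) (l : R3) (k : ℕ)
    (h : ∀ F : R3, F.IsHomogeneous (k + 1) → ∃ b : R3, b.IsHomogeneous k ∧ F - l * b ∈ I) :
    quotDim I (k + 1) ≤ quotDim I k := by
  unfold quotDim
  set π := (Ideal.Quotient.mkₐ ℂ I).toLinearMap
  set W := (homogeneousSubmodule (Fin 3) ℂ k).map π with hW
  have : Module.Finite ℂ W :=
    Module.Finite.iff_fg.2 ((homogeneousSubmodule_fg _ _ k).map π)
  have hle : (homogeneousSubmodule (Fin 3) ℂ (k + 1)).map π ≤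
      W.map (LinearMap.mulLeft ℂ (Ideal.Quotient.mk I l)) := by
    rintro _ ⟨F, hF, rfl⟩
    obtain ⟨b, hb, hFb⟩ := h F hF
    refine ⟨π b, ⟨b, hb, rfl⟩, ?_⟩
    have := (Ideal.Quotient.eq.2 hFb).symm
    rw [map_mul] at this
    exact this
  exact (Submodule.finrank_mono hle).trans (Submodule.finrank_map_le _ _)

theorem stmt13 (n r : ℕ) (hr : 4 ≤ r) (p : Fin r → R3)
    (hhom : ∀ i, (p i).IsHomogeneous n)
    (hli : LinearIndependent ℂ p)
    -- the common zero locus in `ℂ³ ∖ {0}`, viewed in the projectivization of `ℂ³`, is finite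
    (hfin : {q : Projectivization ℂ (Fin 3 → ℂ) |
        ∃ (v : Fin 3 → ℂ) (hv : v ≠ 0), q = Projectivization.mk ℂ v hv ∧
          ∀ i, MvPolynomial.eval v (p i) = 0}.Finite)
    -- the rational map to `ℙ^{r-1}` defined by the `p i` is generically finite:
    -- some nonempty fiber is finite
    (hgf : ∃ v₀ : Fin 3 → ℂ, (fun i => MvPolynomial.eval v₀ (p i)) ≠ 0 ∧
      {q : Projectivization ℂ (Fin 3 → ℂ) |
        ∃ (v : Fin 3 → ℂ) (hv : v ≠ 0), q = Projectivization.mk ℂ v hv ∧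
          ∃ lam : ℂ, lam ≠ 0 ∧
            (fun i => MvPolynomial.eval v (p i)) =
              lam • fun i => MvPolynomial.eval v₀ (p i)}.Finite)
    -- `D` is the eventual constant value of `dim (R/I)_k`
    (D N : ℕ)
    (hD : ∀ k, N ≤ k → quotDim (Ideal.span (Set.range p)) k = D)
    -- `m ≥ 2n - 2` and `dim (R/I)_m = D`
    (m : ℕ) (hm : 2 * n ≤ m + 2)
    (hdim : quotDim (Ideal.span (Set.range p)) m = D) :
    ∀ k : ℕ, m ≤ k → quotDim (Ideal.span (Set.range p)) k = D := by
  set I := Ideal.span (Set.range p) with hI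
  obtain ⟨τ, hτ⟩ := exists_line_avoiding _ hfin
  have hnz : ∀ v : Fin 3 → ℂ, v ≠ 0 → v 0 + τ * v 1 + τ ^ 2 * v 2 = 0 →
      ∃ i, eval v (p i) ≠ 0 := by
    intro v hv hv0
    by_contra! hcon
    exact hτ v hv ⟨v, hv, rfl, hcon⟩ hv0
  obtain ⟨i₀, hi₀⟩ := hnz ![-τ, 1, 0]
    (fun h => by simpa using congrFun h 1) (by simp)
  rw [← (restrictLine_degree τ (hhom i₀)).2] at hi₀
  have hunit : Ideal.span (Set.range fun i => restrictLine τ (p i)) = ⊤ := by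
    obtain ⟨g, hg⟩ := (IsPrincipalIdealRing.principal
      (Ideal.span (Set.range fun i => restrictLine τ (p i)))).principal
    rw [Ideal.submodule_span_eq] at hg
    have hdvd : ∀ i, g ∣ restrictLine τ (p i) := by
      intro i
      rw [← Ideal.mem_span_singleton, ← hg]
      exact Ideal.subset_span ⟨i, rfl⟩
    rw [hg, Ideal.span_singleton_eq_top]
    by_contra hgu
    -- a root of `g` would be a common zero of the `p i` on the line
    obtain ⟨x, hx⟩ := IsAlgClosed.exists_root g
      (fun h => hgu (Polynomial.isUnit_iff_degree_eq_zero.2 h))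
    obtain ⟨i, hi⟩ := hnz ![-τ * x - τ ^ 2, x, 1]
      (fun h => by simpa using congrFun h 2) (by simp; ring)
    rw [← eval_restrictLine] at hi
    exact hi (Polynomial.eval_eq_zero_of_dvd_of_eval_eq_zero (hdvd i) hx)
  have hstep : ∀ k, 2 * n ≤ k + 2 → quotDim I (k + 1) ≤ quotDim I k := by
    intro k hk
    refine quotDim_succ_le I (lineForm τ) k fun F hF => ?_
    obtain ⟨a, ha, hsum⟩ := exists_bounded_combination (e := k + 1) hk
      (fun i => restrictLine τ (p i)) (fun i => (restrictLine_degree τ (hhom i)).1) i₀ hi₀ hunit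
      (restrictLine τ F) (restrictLine_degree τ hF).1
    choose A hA hAa using fun i => exists_lift τ (a i) (k + 1 - n) (ha i)
    have hAp : (∑ i, A i * p i).IsHomogeneous (k + 1) := by
      refine IsHomogeneous.sum _ _ _ fun i _ => ?_
      have := (hA i).mul (hhom i)
      rwa [Nat.sub_add_cancel (by omega)] at this
    obtain ⟨b, hb, hFb⟩ := exists_lineForm_mul τ (hF.sub hAp)
      (by simp only [map_sub, map_sum, map_mul, hAa, hsum, sub_self])
    refine ⟨b, hb, ?_⟩
    rw [← hFb, sub_sub_cancel]
    exact Ideal.sum_mem _ fun i _ => Ideal.mul_mem_left _ _ (Ideal.subset_span ⟨i, rfl⟩)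
  have hanti : ∀ j k, m ≤ j → j ≤ k → quotDim I k ≤ quotDim I j := by
    intro j k hj hjk
    induction k, hjk using Nat.le_induction with
    | base => exact le_rfl
    | succ k hjk ih => exact (hstep k (by omega)).trans ih
  intro k hk
  have h1 := hanti m k le_rfl hk
  have h2 := hanti k (max k N) hk (le_max_left _ _)
  rw [hD _ (le_max_right _ _)] at h2
  omega
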